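/- arXiv:1607.02416 — 4 statements merged into one kernel-verified Lean document; each statement's English description precedes it below -/
import Mathlib

section
/- Let n ≥ 1, let J be the standard symplectic 2n×2n complex matrix, let A be a 2n×2n complex matrix and let λ ∈ ℂ with λ ≠ 1 be such that Aᵀ·J·A = λ·J. Then the eigenspace of A for the eigenvalue 1, i.e. ker(A − I), is totally isotropic for the symplectic bilinear form (v,w) ↦ vᵀ·J·w, and consequently its complex dimension is at most n. -/
open Matrix

/-!
If `v` and `w` are fixed by `A`, then `vᵀ J w = (A v)ᵀ J (A w) = λ vᵀ J w`, and `λ ≠ 1` forces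
`vᵀ J w = 0`; so `W = ker (A - 1)` is contained in its orthogonal complement for the form of `J`.
This form is nondegenerate, hence `dim W + dim W^⊥ = 2n`, and `W ≤ W^⊥` gives `dim W ≤ n`.
-/

/-- If `J` is the standard symplectic `2n × 2n` complex matrix, `λ ≠ 1` and
`Aᵀ · J · A = λ · J`, then the eigenspace `ker (A - I)` of `A` for the eigenvalue `1`
is totally isotropic for the symplectic form `(v, w) ↦ vᵀ · J · w`, and consequently
its dimension is at most `n`. -/
theorem fixed_eigenspace_isotropic_of_symplectic_similitude (n : ℕ) (hn : 1 ≤ n)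
    (J A : Matrix (Fin n ⊕ Fin n) (Fin n ⊕ Fin n) ℂ)
    (hJ : J = Matrix.fromBlocks 0 (-1) 1 0)
    (lam : ℂ) (hlam : lam ≠ 1) (h : Aᵀ * J * A = lam • J) :
    (∀ v ∈ LinearMap.ker (A - 1).mulVecLin, ∀ w ∈ LinearMap.ker (A - 1).mulVecLin,
        dotProduct v (J.mulVec w) = 0) ∧
    Module.finrank ℂ (LinearMap.ker (A - 1).mulVecLin) ≤ n := by
  have hfix : ∀ v ∈ LinearMap.ker (A - 1).mulVecLin, A *ᵥ v = v := fun v hv => by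
    simpa [Matrix.sub_mulVec, sub_eq_zero] using hv
  have hiso : ∀ v ∈ LinearMap.ker (A - 1).mulVecLin, ∀ w ∈ LinearMap.ker (A - 1).mulVecLin,
      v ⬝ᵥ (J *ᵥ w) = 0 := by
    intro v hv w hw
    have key : v ⬝ᵥ (J *ᵥ w) = lam * (v ⬝ᵥ (J *ᵥ w)) := by
      calc v ⬝ᵥ (J *ᵥ w) = (A *ᵥ v) ⬝ᵥ (J *ᵥ (A *ᵥ w)) := by rw [hfix v hv, hfix w hw]
        _ = v ⬝ᵥ ((Aᵀ * J * A) *ᵥ w) := by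
          rw [← Matrix.mulVec_mulVec, ← Matrix.mulVec_mulVec, Matrix.dotProduct_mulVec v Aᵀ,
            Matrix.vecMul_transpose]
        _ = lam * (v ⬝ᵥ (J *ᵥ w)) := by
          rw [h, Matrix.smul_mulVec, dotProduct_smul, smul_eq_mul]
    have : (lam - 1) * (v ⬝ᵥ (J *ᵥ w)) = 0 := by linear_combination -key
    exact (mul_eq_zero.mp this).resolve_left (sub_ne_zero.mpr hlam)
  refine ⟨hiso, ?_⟩
  have hdet : J.det ≠ 0 := by
    rw [hJ]
    exact (Matrix.isUnit_det_J (Fin n) ℂ).ne_zero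
  have hnd : (Matrix.toBilin' J).Nondegenerate :=
    LinearMap.BilinForm.nondegenerate_toBilin'_of_det_ne_zero' J hdet
  have hle : LinearMap.ker (A - 1).mulVecLin ≤
      (Matrix.toBilin' J).orthogonal (LinearMap.ker (A - 1).mulVecLin) := by
    intro w hw v hv
    change Matrix.toBilin' J v w = 0
    rw [Matrix.toBilin'_apply']
    exact hiso v hv w hw
  have h1 := Submodule.finrank_mono hle
  rw [LinearMap.BilinForm.finrank_orthogonal hnd] at h1
  have h2 := Submodule.finrank_le (LinearMap.ker (A - 1).mulVecLin)
  simp only [Module.finrank_fintype_fun_eq_card, Fintype.card_sum, Fintype.card_fin] at h1 h2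
  omega
end

section
/- Let n ≥ 1, let J be the standard symplectic 2n×2n complex matrix, and let A be a 2n×2n complex matrix with A² = I and Aᵀ·J·A = −J. Then the eigenspaces ker(A − I) and ker(A + I) each have complex dimension exactly n, and det A = (−1)ⁿ. -/
open Matrix

/-!
The two hypotheses give `Aᵀ J = -J A`, hence `(A - 1)ᵀ J = -J (A + 1)`, so `A - 1` and `A + 1`
have the same rank because `J` is invertible. Since `(A - 1) (A + 1) = 0` and the two kernels meet
trivially (`2` is invertible), these ranks add up to `2n`, so both are `n`, and rank-nullity gives the
dimensions of the eigenspaces. For the determinant, `i A` is symplectic and so has determinant `1`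
(`SymplecticGroup.det_eq_one`), that is `i ^ (2n) det A = 1`.
-/

/-- If `J` is the standard symplectic `2n × 2n` complex matrix, `A² = I` and
`Aᵀ · J · A = −J`, then the eigenspaces `ker (A − I)` and `ker (A + I)` each have
dimension exactly `n`, and `det A = (−1)ⁿ`. -/
theorem nonsymplectic_involution_eigenspaces (n : ℕ) (hn : 1 ≤ n)
    (J A : Matrix (Fin n ⊕ Fin n) (Fin n ⊕ Fin n) ℂ)
    (hJ : J = Matrix.fromBlocks 0 (-1) 1 0)
    (hA : A ^ 2 = 1) (h : Aᵀ * J * A = -J) :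
    Module.finrank ℂ (LinearMap.ker (A - 1).mulVecLin) = n ∧
    Module.finrank ℂ (LinearMap.ker (A + 1).mulVecLin) = n ∧
    A.det = (-1 : ℂ) ^ n := by
  have hJ' : J = Matrix.J (Fin n) ℂ := hJ
  have hAA : A * A = 1 := by rw [← sq, hA]
  have hJu : IsUnit J.det := hJ' ▸ isUnit_det_J (Fin n) ℂ
  have hanti : Aᵀ * J = -(J * A) := by
    calc Aᵀ * J = Aᵀ * J * (A * A) := by rw [hAA, mul_one]
      _ = -(J * A) := by rw [← mul_assoc, h, neg_mul]
  have hrank : (A - 1).rank = (A + 1).rank := by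
    have e : (A - 1)ᵀ * J = -J * (A + 1) := by
      rw [transpose_sub, transpose_one, sub_mul, hanti]
      noncomm_ring
    have hJn : IsUnit (-J).det := by
      rw [← isUnit_iff_isUnit_det] at hJu ⊢
      exact hJu.neg
    rw [← rank_transpose, ← rank_mul_eq_left_of_isUnit_det J _ hJu, e,
      rank_mul_eq_right_of_isUnit_det _ _ hJn]
  have n1 := (A - 1).mulVecLin.finrank_range_add_finrank_ker
  have n2 := (A + 1).mulVecLin.finrank_range_add_finrank_ker
  have hle : Module.finrank ℂ (LinearMap.range (A + 1).mulVecLin) ≤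
      Module.finrank ℂ (LinearMap.ker (A - 1).mulVecLin) := by
    apply Submodule.finrank_mono
    rw [LinearMap.range_le_ker_iff, ← mulVecLin_mul]
    have : (A - 1) * (A + 1) = 0 := by
      rw [sub_mul, mul_add, hAA]
      noncomm_ring
    rw [this, mulVecLin_zero]
  have hinf : LinearMap.ker (A - 1).mulVecLin ⊓ LinearMap.ker (A + 1).mulVecLin = ⊥ := by
    rw [eq_bot_iff]
    rintro v ⟨h1, h2⟩
    simp only [SetLike.mem_coe, LinearMap.mem_ker, mulVecLin_apply, sub_mulVec, add_mulVec,
      one_mulVec] at h1 h2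
    rw [Submodule.mem_bot]
    have h3 : v + v = 0 := by
      rw [sub_eq_zero.mp h1] at h2
      exact h2
    exact self_eq_neg.mp (eq_neg_of_add_eq_zero_left h3)
  have hge := Submodule.finrank_add_finrank_le_of_disjoint (disjoint_iff.mpr hinf)
  simp only [Module.finrank_fintype_fun_eq_card, Fintype.card_sum, Fintype.card_fin] at n1 n2 hge
  unfold Matrix.rank at hrank
  refine ⟨by omega, by omega, ?_⟩
  have hsymp : Complex.I • A ∈ symplecticGroup (Fin n) ℂ := by
    rw [SymplecticGroup.mem_iff', ← hJ', transpose_smul, smul_mul, smul_mul, Matrix.mul_smul,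
      smul_smul, h]
    simp
  have hdet := SymplecticGroup.det_eq_one hsymp
  rw [det_smul, Fintype.card_sum, Fintype.card_fin, ← two_mul, pow_mul, Complex.I_sq] at hdet
  calc A.det = ((-1) ^ n * (-1) ^ n) * A.det := by rw [← mul_pow]; simp
    _ = (-1) ^ n := by rw [mul_assoc, hdet, mul_one]
end

section
/- Let T ⊆ ℕ × ℕ be the set of pairs (N, N') with: N = 1 and N' ≤ 10; or N = 2 and N' ≤ 10; or N = 3 and N' ≤ 7; or N = 4 and N' ≤ 6; or N = 5 and N' ≤ 6; or N = 6 and N' ≤ 6; or N = 7 and N' ≤ 3; or N = 8 and N' ≤ 2; or N = 9 and N' ≤ 2; or N = 10 and N' ≤ 2. Define h¹¹(N,N') = (24 + 3N − 2N' + N²)/2, h²¹(N,N') = N·N', h³¹(N,N') = (20 − 2N + N' + N'²)/2 and h²²(N,N') = 132 + 2N − 2N' + 2N² − 2N·N' + 2N'². If (N₁,N₁') ∈ T and (N₂,N₂') ∈ T satisfy h¹¹(N₁,N₁') = h³¹(N₂,N₂'), h³¹(N₁,N₁') = h¹¹(N₂,N₂'), h²¹(N₁,N₁') = h²¹(N₂,N₂')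 and h²²(N₁,N₁') = h²²(N₂,N₂'), then (N₁,N₁') = (N₂,N₂'), N₁' = N₁ + 1 and 1 ≤ N₁ ≤ 5. -/
/-!
Put `d = N - N'` and `s = N + N'`. The pair `h²¹ = N N'` and `h²²` determine `d² + d`, so two pairs
with the same `h²¹` and `h²²` satisfy `d₁ = d₂` or `d₁ + d₂ = -1`. Moreover
`2 (h¹¹ - h³¹) = (d + 1) (s + 4)`, and exchanging `h¹¹` with `h³¹` flips the sign of this quantity.

If `d₁ = d₂`, equality of the products `N N'` makes the two pairs equal, and then
`(d + 1) (s + 4) = 0` forces `N' = N + 1`; the bounds defining `T` leave only `N ≤ 5`.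

If `d₁ + d₂ = -1`, then with `d = d₁` and `k = s₂ - s₁` one gets `s₁ + 4 = d k`,
`s₂ + 4 = (d + 1) k` and `(k² - 1) (2 d + 1) = 8 k`, which has no integer solution with
`s₁, s₂ ≥ 0` (`no_crossed_solution`).
-/

/-- The Diophantine obstruction behind the case `d₁ + d₂ = -1`: the equation forces `|k| ≤ 8`, and
none of these values is compatible with the positivity conditions. -/
lemma no_crossed_solution (d k : ℤ) (hu : 4 ≤ d * k) (hv : 4 ≤ (d + 1) * k)
    (h : (k ^ 2 - 1) * (2 * d + 1) = 8 * k) : False := by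
  have hk : -8 ≤ k ∧ k ≤ 8 := by
    rcases le_or_gt 0 d with hd | hd
    · have hk0 : 0 < k := by
        by_contra hneg
        nlinarith
      exact ⟨by omega, by nlinarith [mul_nonneg hd (show 0 ≤ k ^ 2 - 1 by nlinarith)]⟩
    · have hk0 : k < 0 := by
        by_contra hneg
        nlinarith
      have hd' : 0 ≤ -d - 1 := by omega
      exact ⟨by nlinarith [mul_nonneg hd' (show 0 ≤ k ^ 2 - 1 by nlinarith)], by omega⟩
  obtain ⟨hl, hr⟩ := hk
  interval_cases k <;> omega

/-- The set `T` of admissible pairs of Nikulin invariants `(N, N')` of non symplectic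
involutions on K3 surfaces, as in the paper's Appendix. -/
def inT (N N' : ℕ) : Prop :=
  (N = 1 ∧ N' ≤ 10) ∨ (N = 2 ∧ N' ≤ 10) ∨ (N = 3 ∧ N' ≤ 7) ∨ (N = 4 ∧ N' ≤ 6) ∨
  (N = 5 ∧ N' ≤ 6) ∨ (N = 6 ∧ N' ≤ 6) ∨ (N = 7 ∧ N' ≤ 3) ∨ (N = 8 ∧ N' ≤ 2) ∨
  (N = 9 ∧ N' ≤ 2) ∨ (N = 10 ∧ N' ≤ 2)

/-- `h¹¹(N, N') = (24 + 3N − 2N' + N²)/2`. -/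
def h11 (N N' : ℕ) : ℚ := (24 + 3 * N - 2 * N' + N ^ 2) / 2

/-- `h²¹(N, N') = N·N'`. -/
def h21 (N N' : ℕ) : ℚ := N * N'

/-- `h³¹(N, N') = (20 − 2N + N' + N'²)/2`. -/
def h31 (N N' : ℕ) : ℚ := (20 - 2 * N + N' + N' ^ 2) / 2

/-- `h²²(N, N') = 132 + 2N − 2N' + 2N² − 2NN' + 2N'²`. -/
def h22 (N N' : ℕ) : ℚ := 132 + 2 * N - 2 * N' + 2 * N ^ 2 - 2 * N * N' + 2 * N' ^ 2

/-- There are no mirror pairs among the Calabi–Yau 4-folds `Y_S`, except the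
self-mirror ones associated to `N' = N + 1` for `N = 1, …, 5`. -/
theorem no_mirror_pairs_except_self_mirror
    (N₁ N₁' N₂ N₂' : ℕ) (h1 : inT N₁ N₁') (h2 : inT N₂ N₂')
    (e11 : h11 N₁ N₁' = h31 N₂ N₂') (e31 : h31 N₁ N₁' = h11 N₂ N₂')
    (e21 : h21 N₁ N₁' = h21 N₂ N₂') (e22 : h22 N₁ N₁' = h22 N₂ N₂') :
    (N₁, N₁') = (N₂, N₂') ∧ N₁' = N₁ + 1 ∧ 1 ≤ N₁ ∧ N₁ ≤ 5 := by
  -- The four equalities, with denominators cleared, over `ℤ`.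
  have z11 : (24 + 3 * N₁ - 2 * N₁' + N₁ ^ 2 : ℤ) = 20 - 2 * N₂ + N₂' + N₂' ^ 2 := by
    unfold h11 h31 at e11
    have : (24 + 3 * N₁ - 2 * N₁' + N₁ ^ 2 : ℚ) = 20 - 2 * N₂ + N₂' + N₂' ^ 2 := by linarith
    exact_mod_cast this
  have z31 : (20 - 2 * N₁ + N₁' + N₁' ^ 2 : ℤ) = 24 + 3 * N₂ - 2 * N₂' + N₂ ^ 2 := by
    unfold h11 h31 at e31
    have : (20 - 2 * N₁ + N₁' + N₁' ^ 2 : ℚ) = 24 + 3 * N₂ - 2 * N₂' + N₂ ^ 2 := by linarith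
    exact_mod_cast this
  have z21 : (N₁ * N₁' : ℤ) = N₂ * N₂' := by
    unfold h21 at e21
    exact_mod_cast e21
  have z22 : (132 + 2 * N₁ - 2 * N₁' + 2 * N₁ ^ 2 - 2 * N₁ * N₁' + 2 * N₁' ^ 2 : ℤ)
      = 132 + 2 * N₂ - 2 * N₂' + 2 * N₂ ^ 2 - 2 * N₂ * N₂' + 2 * N₂' ^ 2 := by
    unfold h22 at e22
    exact_mod_cast e22
  -- `d₁² + d₁ = d₂² + d₂`, in factored form.
  have hd : ((N₁ - N₁' : ℤ) - (N₂ - N₂')) * ((N₁ - N₁' : ℤ) + (N₂ - N₂') + 1) = 0 := by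
    refine mul_left_cancel₀ (two_ne_zero' ℤ) ?_
    linear_combination z22 - 2 * z21
  -- `(d₁ + 1) (s₁ + 4) + (d₂ + 1) (s₂ + 4) = 0`.
  have hs : (N₁ - N₁' + 1 : ℤ) * (N₁ + N₁' + 4) + (N₂ - N₂' + 1) * (N₂ + N₂' + 4) = 0 := by
    linear_combination z11 - z31
  rcases mul_eq_zero.mp hd with hd | hd
  · have hss : (N₁ + N₁' : ℤ) = N₂ + N₂' := by
      refine (sq_eq_sq₀ (by positivity) (by positivity)).mp ?_
      linear_combination 4 * z21 + (N₁ - N₁' + (N₂ - N₂') : ℤ) * hd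
    obtain rfl : N₁ = N₂ := by omega
    obtain rfl : N₁' = N₂' := by omega
    have hz : (N₁ - N₁' + 1 : ℤ) * (N₁ + N₁' + 4) = 0 := by linarith
    have hN : (N₁ - N₁' + 1 : ℤ) = 0 :=
      (mul_eq_zero.mp hz).resolve_right (by positivity)
    unfold inT at h1
    refine ⟨rfl, ?_, ?_, ?_⟩ <;> omega
  · exfalso
    obtain ⟨d, hdd⟩ : ∃ d : ℤ, d = N₁ - N₁' := ⟨_, rfl⟩
    obtain ⟨k, hk⟩ : ∃ k : ℤ, k = (N₂ + N₂') - (N₁ + N₁') := ⟨_, rfl⟩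
    have hd₂ : (N₂ - N₂' : ℤ) = -1 - d := by linarith
    rw [← hdd, hd₂] at hs
    have hu : d * k = N₁ + N₁' + 4 := by
      rw [hk]
      linear_combination -hs
    have hv : (d + 1) * k = N₂ + N₂' + 4 := by linear_combination hu + hk
    -- `s₂² - s₁² = d₂² - d₁² = 2 d + 1`, because `s² - d² = 4 N N'`.
    have hsq : k * ((N₁ + N₁') + (N₂ + N₂')) = 2 * d + 1 := by
      have h₁ : ((N₁ + N₁' : ℤ)) ^ 2 = d ^ 2 + 4 * (N₁ * N₁') := by rw [hdd]; ring
      have h₂ : ((N₂ + N₂' : ℤ)) ^ 2 = (-1 - d) ^ 2 + 4 * (N₂ * N₂') := by rw [← hd₂]; ring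
      rw [hk]
      linear_combination h₂ - h₁ - 4 * z21
    refine no_crossed_solution d k (by rw [hu]; omega) (by rw [hv]; omega) ?_
    linear_combination hsq + k * hu + k * hv
end

section
/- Let T ⊆ ℕ × ℕ be the set of pairs (N, N') with: N = 1 and N' ≤ 10; or N = 2 and N' ≤ 10; or N = 3 and N' ≤ 7; or N = 4 and N' ≤ 6; or N = 5 and N' ≤ 6; or N = 6 and N' ≤ 6; or N = 7 and N' ≤ 3; or N = 8 and N' ≤ 2; or N = 9 and N' ≤ 2; or N = 10 and N' ≤ 2. Define h¹¹(N,N') = (24 + 3N − 2N' + N²)/2, h²¹(N,N') = N·N', h³¹(N,N') = (20 − 2N + N' + N'²)/2 and h²²(N,N') = 132 + 2N − 2N' + 2N² − 2N·N' + 2N'². Then the map T → ℕ⁴ sending (N,N') to (h¹¹(N,N'), h²¹(N,N'), h³¹(N,N'), h²²(N,N')) is injective. -/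
/-- Equality of `h¹¹` with denominators and subtractions cleared. -/
theorem nat_eq_of_h11_eq {a a' b b' : ℕ} (h : h11 a a' = h11 b b') :
    3 * a + a ^ 2 + 2 * b' = 3 * b + b ^ 2 + 2 * a' := by
  unfold h11 at h
  have hq : (3 * a + a ^ 2 + 2 * b' : ℚ) = 3 * b + b ^ 2 + 2 * a' := by linarith
  exact_mod_cast hq

theorem nat_eq_of_h21_eq {a a' b b' : ℕ} (h : h21 a a' = h21 b b') : a * a' = b * b' := by
  unfold h21 at h
  exact_mod_cast h

/-- `h¹¹` and `h²¹` cannot both agree when the first invariants differ: `a < b` forces `a' < b'`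
through `h¹¹`, hence `a * a' < b * b'`. -/
theorem not_lt_of_h11_h21_eq {a a' b b' : ℕ} (h : h11 a a' = h11 b b')
    (k : h21 a a' = h21 b b') : ¬ a < b := by
  intro hab
  have e := nat_eq_of_h11_eq h
  have hsq : a ^ 2 ≤ b ^ 2 := Nat.pow_le_pow_left hab.le 2
  have hab' : a' < b' := by omega
  exact (Nat.mul_lt_mul'' hab hab').ne (nat_eq_of_h21_eq k)

/-- The map sending `(N, N') ∈ T` to the Hodge numbers
`(h¹¹, h²¹, h³¹, h²²)` of `Y_S` is injective: the 64 admissible pairs give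
64 distinct Hodge diamonds. -/
theorem hodge_diamond_map_injective
    (N₁ N₁' N₂ N₂' : ℕ) (h1 : inT N₁ N₁') (h2 : inT N₂ N₂')
    (heq : (h11 N₁ N₁', h21 N₁ N₁', h31 N₁ N₁', h22 N₁ N₁') =
      (h11 N₂ N₂', h21 N₂ N₂', h31 N₂ N₂', h22 N₂ N₂')) :
    (N₁, N₁') = (N₂, N₂') := by
  simp only [Prod.mk.injEq] at heq
  obtain ⟨e11, e21, -, -⟩ := heq
  have hN : N₁ = N₂ := le_antisymm
    (not_lt.mp (not_lt_of_h11_h21_eq e11.symm e21.symm))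
    (not_lt.mp (not_lt_of_h11_h21_eq e11 e21))
  subst hN
  have e := nat_eq_of_h11_eq e11
  have hN' : N₁' = N₂' := by omega
  rw [hN']
end
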